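/- arXiv:1510.06181 — 2 statements merged into one kernel-verified Lean document; each statement's English description precedes it below -/
import Mathlib

section
/- Let R be a noetherian integral domain with fraction field K and let A be a finite flat R-algebra. For any partition P in the image Γ_A of γ_A, the closure of the stratum Γ_A(P) = γ_A^{-1}(P) in Spec(R) is contained in the skeleton Γ_A^≤(P) = ⋃_{P' ≤ P} γ_A^{-1}(P'). In particular, the decomposition Spec(R) = ⨿_{P ∈ Γ_A} Γ_A(P) is a stratification of Spec(R). -/
open TensorProduct

section BlockDefs
variable {B : Type*} [Ring B]

/-- `e` is a centrally-primitive ("block") idempotent of the subring of `B` with carrier `S`: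
it is a nonzero idempotent of `S`, central in `S`, and not the sum of two nonzero orthogonal
central idempotents of `S`. -/
def IsBlockIdemOn (S : Set B) (e : B) : Prop :=
  e ∈ S ∧ IsIdempotentElem e ∧ e ≠ 0 ∧ (∀ x ∈ S, e * x = x * e) ∧
    ∀ f g : B, f ∈ S → g ∈ S → (∀ x ∈ S, f * x = x * f) → (∀ x ∈ S, g * x = x * g) →
      IsIdempotentElem f → IsIdempotentElem g → f * g = 0 → f + g = e → f = 0 ∨ g = 0

/-- `e` is a centrally-primitive ("block") idempotent of the ring `B`. -/
def IsBlockIdem (e : B) : Prop := IsBlockIdemOn Set.univ e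

end BlockDefs

/-- The subring `A_p` of `A^K = K ⊗[R] A`: elements of the form `a/s` with `s ∉ p`. -/
def localizedAt (R : Type*) [CommRing R] [IsDomain R] (A : Type*) [Ring A] [Algebra R A]
    (p : PrimeSpectrum R) : Set (FractionRing R ⊗[R] A) :=
  {x | ∃ (a : A) (s : R), s ∉ p.asIdeal ∧ s • x = Algebra.TensorProduct.includeRight a}

/-- Two elements of `A^K` (typically block idempotents of `A^K`) lie in the same block of the
localization `A_p`, i.e. there is a block idempotent of `A_p` acting as the identity on both. -/
def inSameBlockAt (R : Type*) [CommRing R] [IsDomain R] (A : Type*) [Ring A] [Algebra R A]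
    (p : PrimeSpectrum R) (c d : FractionRing R ⊗[R] A) : Prop :=
  ∃ e, IsBlockIdemOn (localizedAt R A p) e ∧ e * c = c ∧ e * d = d

variable (R : Type*) [CommRing R] [IsDomain R] (A : Type*) [Ring A] [Algebra R A]

theorem aux_mem_of_le {p : PrimeSpectrum R} {a : A} :
    (Algebra.TensorProduct.includeRight a : FractionRing R ⊗[R] A) ∈ localizedAt R A p :=
  ⟨a, 1, fun h => p.isPrime.ne_top ((Ideal.eq_top_iff_one _).2 h), one_smul _ _⟩

theorem aux_one (p : PrimeSpectrum R) : (1 : FractionRing R ⊗[R] A) ∈ localizedAt R A p := by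
  have := aux_mem_of_le R A (p := p) (a := 1)
  rwa [map_one] at this

theorem aux_mul {p : PrimeSpectrum R} {x y : FractionRing R ⊗[R] A}
    (hx : x ∈ localizedAt R A p) (hy : y ∈ localizedAt R A p) : x * y ∈ localizedAt R A p := by
  obtain ⟨a, s, hs, h⟩ := hx
  obtain ⟨b, t, ht, h'⟩ := hy
  refine ⟨a * b, s * t, fun hh => (p.isPrime.mem_or_mem hh).elim hs ht, ?_⟩
  rw [map_mul, ← h, ← h', smul_mul_smul_comm]

theorem aux_one_sub {p : PrimeSpectrum R} {x : FractionRing R ⊗[R] A}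
    (hx : x ∈ localizedAt R A p) : 1 - x ∈ localizedAt R A p := by
  obtain ⟨a, s, hs, h⟩ := hx
  refine ⟨s • 1 - a, s, hs, ?_⟩
  rw [map_sub, map_smul, map_one, ← h, smul_sub]

theorem aux_denom (x : FractionRing R ⊗[R] A) :
    ∃ (a : A) (s : R), s ≠ 0 ∧ s • x = Algebra.TensorProduct.includeRight a := by
  induction x with
  | zero => exact ⟨0, 1, one_ne_zero, by simp⟩
  | tmul k a =>
    obtain ⟨r, s, hs, rfl⟩ := IsFractionRing.div_surjective (A := R) k
    have hs0 : s ≠ 0 := nonZeroDivisors.ne_zero hs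
    refine ⟨r • a, s, hs0, ?_⟩
    have h1 : algebraMap R (FractionRing R) s ≠ 0 := by
      simpa using hs0
    rw [Algebra.TensorProduct.includeRight_apply, ← TensorProduct.smul_tmul,
      TensorProduct.smul_tmul', Algebra.smul_def, Algebra.smul_def, mul_one,
      mul_div_cancel₀ _ h1]
  | add x y hx hy =>
    obtain ⟨a, s, hs, h⟩ := hx
    obtain ⟨b, t, ht, h'⟩ := hy
    refine ⟨t • a + s • b, s * t, mul_ne_zero hs ht, ?_⟩
    rw [map_add, map_smul, map_smul, ← h, ← h', smul_add, smul_smul, smul_smul, mul_comm t s]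

theorem aux_tf {s : R} (hs : s ≠ 0) {x : FractionRing R ⊗[R] A} (h : s • x = 0) : x = 0 := by
  have h1 : algebraMap R (FractionRing R) s ≠ 0 := by
    simpa using hs
  rw [← algebraMap_smul (FractionRing R) s x] at h
  exact (smul_eq_zero_iff_right h1).1 h

theorem aux_central {p : PrimeSpectrum R} {e : FractionRing R ⊗[R] A}
    (he : ∀ x ∈ localizedAt R A p, e * x = x * e) (x : FractionRing R ⊗[R] A) :
    e * x = x * e := by
  obtain ⟨a, s, hs, h⟩ := aux_denom R A x
  have h2 := he _ (aux_mem_of_le R A (p := p) (a := a))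
  rw [← h, mul_smul_comm, smul_mul_assoc] at h2
  rw [← sub_eq_zero] at h2 ⊢
  exact aux_tf R A hs ((smul_sub s _ _).trans h2)

/-- Central idempotents. -/
def auxE : Set (FractionRing R ⊗[R] A) := {e | IsIdempotentElem e ∧ ∀ x, e * x = x * e}

theorem aux_artinian (Z : Type*) [CommRing Z] [IsArtinianRing Z] :
    {e : Z | IsIdempotentElem e}.Finite := by
  have : Finite (TopologicalSpace.Clopens (PrimeSpectrum Z)) :=
    Finite.of_injective (fun s => (s : Set (PrimeSpectrum Z))) SetLike.coe_injective
  have : Finite {e : Z | IsIdempotentElem e} :=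
    Finite.of_equiv _ (PrimeSpectrum.isIdempotentElemEquivClopens (R := Z)).toEquiv.symm
  exact Set.toFinite _

theorem auxE_finite [Module.Finite R A] : (auxE R A).Finite := by
  let Z := Subalgebra.center (FractionRing R) (FractionRing R ⊗[R] A)
  have : Module.Finite (FractionRing R) Z :=
    inferInstanceAs (Module.Finite (FractionRing R) (Subalgebra.toSubmodule Z))
  have : IsArtinianRing Z := IsArtinianRing.of_finite (FractionRing R) Z
  have hf : {e : Z | IsIdempotentElem e}.Finite := aux_artinian Z
  refine (hf.image (fun e : Z => (e : FractionRing R ⊗[R] A))).subset ?_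
  rintro e ⟨h1, h2⟩
  refine ⟨⟨e, Subalgebra.mem_center_iff.2 fun b => (h2 b).symm⟩, Subtype.ext h1, rfl⟩

theorem auxE_one_sub {e : FractionRing R ⊗[R] A} (he : e ∈ auxE R A) : 1 - e ∈ auxE R A :=
  ⟨he.1.one_sub, fun x => by rw [sub_mul, mul_sub, he.2 x, one_mul, mul_one]⟩

theorem auxE_mul {e f : FractionRing R ⊗[R] A} (he : e ∈ auxE R A) (hf : f ∈ auxE R A) :
    e * f ∈ auxE R A := by
  refine ⟨?_, fun x => ?_⟩
  · exact IsIdempotentElem.mul_of_commute (he.2 f) he.1 hf.1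
  · rw [mul_assoc, hf.2, ← mul_assoc, he.2, mul_assoc]

theorem aux_block {c e : FractionRing R ⊗[R] A} (hc : IsBlockIdem c) (he : e ∈ auxE R A) :
    e * c = c ∨ e * c = 0 := by
  obtain ⟨-, h1, h2, h3, h4⟩ := hc
  have hcE : c ∈ auxE R A := ⟨h1, fun x => h3 x trivial⟩
  have hf := auxE_mul R A he hcE
  have hg := auxE_mul R A (auxE_one_sub R A he) hcE
  rcases h4 (e * c) ((1 - e) * c) trivial trivial (fun x _ => hf.2 x) (fun x _ => hg.2 x) hf.1 hg.1
    (by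
      have : e * c * ((1 - e) * c) = (e * (1 - e)) * (c * c) := by
        rw [mul_assoc, ← mul_assoc c, hcE.2 (1 - e), mul_assoc, mul_assoc]
      rw [this, he.1.mul_one_sub_self, zero_mul])
    (by rw [← add_mul, add_sub_cancel, one_mul]) with h | h
  · exact Or.inr h
  · left
    rw [sub_mul, one_mul, sub_eq_zero] at h
    exact h.symm

/-- There is a smallest element of a finite set of central idempotents closed under products. -/
theorem aux_least {T : Set (FractionRing R ⊗[R] A)} (hT : T.Finite) (hE : T ⊆ auxE R A)
    (h1 : 1 ∈ T) (hmul : ∀ e ∈ T, ∀ f ∈ T, e * f ∈ T) :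
    ∃ e ∈ T, ∀ f ∈ T, f * e = e := by
  suffices H : ∀ U : Set (FractionRing R ⊗[R] A), U.Finite → U ⊆ T →
      ∃ e ∈ T, ∀ f ∈ U, f * e = e from H T hT le_rfl
  intro U hU
  induction U, hU using Set.Finite.induction_on with
  | empty => exact fun _ => ⟨1, h1, by simp⟩
  | insert _ _ ih =>
    rename_i a s _ _
    intro hs
    obtain ⟨e, he, h⟩ := ih (fun x hx => hs (Set.mem_insert_of_mem _ hx))
    have ha : a ∈ T := hs (Set.mem_insert _ _)
    refine ⟨a * e, hmul _ ha _ he, ?_⟩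
    rintro f (rfl | hf)
    · rw [← mul_assoc, (hE ha).1.eq]
    · rw [← mul_assoc, ← (hE ha).2 f, mul_assoc, h f hf]

theorem aux_same [Module.Finite R A] (q : PrimeSpectrum R) {c d : FractionRing R ⊗[R] A}
    (hc : IsBlockIdem c) (hd : IsBlockIdem d) :
    inSameBlockAt R A q c d ↔
      ∀ e ∈ auxE R A, e ∈ localizedAt R A q → (e * c = c ↔ e * d = d) := by
  constructor
  · rintro ⟨e₀, ⟨m, i, n, z, pr⟩, h1, h2⟩ e he heq
    have h0 : e₀ ∈ auxE R A := ⟨i, aux_central R A z⟩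
    have hf := auxE_mul R A he h0
    have hg := auxE_mul R A (auxE_one_sub R A he) h0
    have key := pr (e * e₀) ((1 - e) * e₀) (aux_mul R A heq m)
      (aux_mul R A (aux_one_sub R A heq) m) (fun x _ => hf.2 x) (fun x _ => hg.2 x) hf.1 hg.1
      (by
        have : e * e₀ * ((1 - e) * e₀) = (e * (1 - e)) * (e₀ * e₀) := by
          rw [mul_assoc, ← mul_assoc e₀, h0.2 (1 - e), mul_assoc, mul_assoc]
        rw [this, he.1.mul_one_sub_self, zero_mul])
      (by rw [← add_mul, add_sub_cancel, one_mul])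
    have gen : ∀ x, e₀ * x = x → (e * x = 0 ∨ e * x = x) ∧
        (e * e₀ = 0 → e * x = 0) ∧ ((1 - e) * e₀ = 0 → e * x = x) := by
      intro x hx
      have a1 : e * e₀ = 0 → e * x = 0 := fun h => by rw [← hx, ← mul_assoc, h, zero_mul]
      have a2 : (1 - e) * e₀ = 0 → e * x = x := fun h => by
        have : (1 - e) * x = 0 := by rw [← hx, ← mul_assoc, h, zero_mul]
        rw [sub_mul, one_mul, sub_eq_zero] at this
        exact this.symm
      exact ⟨key.imp a1 a2, a1, a2⟩
    have hc0 : c ≠ 0 := hc.2.2.1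
    have hd0 : d ≠ 0 := hd.2.2.1
    rcases key with h | h
    · rw [(gen c h1).2.1 h, (gen d h2).2.1 h]
      exact ⟨fun h => (hc0 h.symm).elim, fun h => (hd0 h.symm).elim⟩
    · exact ⟨fun _ => (gen d h2).2.2 h, fun _ => (gen c h1).2.2 h⟩
  · intro H
    obtain ⟨e, ⟨he, heq, hec⟩, hmin⟩ := aux_least R A
      (T := {e | e ∈ auxE R A ∧ e ∈ localizedAt R A q ∧ e * c = c})
      ((auxE_finite R A).subset fun x hx => hx.1) (fun x hx => hx.1)
      ⟨⟨IsIdempotentElem.one, fun x => by simp⟩, aux_one R A q, one_mul _⟩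
      (fun e he f hf => ⟨auxE_mul R A he.1 hf.1, aux_mul R A he.2.1 hf.2.1, by
        rw [mul_assoc, hf.2.2, he.2.2]⟩)
    have hc0 : c ≠ 0 := hc.2.2.1
    refine ⟨e, ⟨heq, he.1, ?_, fun x _ => he.2 x, ?_⟩, hec, (H e he heq).1 hec⟩
    · rintro rfl
      exact hc0 (by rw [← hec, zero_mul])
    · intro f g hf hg zf zg idf idg hfg hsum
      have fE : f ∈ auxE R A := ⟨idf, aux_central R A zf⟩
      have gE : g ∈ auxE R A := ⟨idg, aux_central R A zg⟩
      rcases aux_block R A hc fE with h | h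
      · right
        have := hmin f ⟨fE, hf, h⟩
        rw [← hsum, mul_add, idf.eq, hfg, add_zero] at this
        simpa using this
      · left
        have hgc : g * c = c := by
          rw [← hsum, add_mul, h, zero_add] at hec
          exact hec
        have := hmin g ⟨gE, hg, hgc⟩
        rw [← hsum, mul_add, idg.eq, ← fE.2 g, hfg, zero_add] at this
        simpa using this

theorem aux_open (e : FractionRing R ⊗[R] A) :
    IsOpen {q : PrimeSpectrum R | e ∈ localizedAt R A q} := by
  have : {q : PrimeSpectrum R | e ∈ localizedAt R A q} =
      ⋃ (s : R) (_ : ∃ a : A, s • e = Algebra.TensorProduct.includeRight a),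
        (PrimeSpectrum.basicOpen s : Set (PrimeSpectrum R)) := by
    ext q
    simp only [localizedAt, Set.mem_ofPred_eq, Set.mem_iUnion, SetLike.mem_coe,
      PrimeSpectrum.mem_basicOpen]
    constructor
    · rintro ⟨a, s, hs, h⟩
      exact ⟨s, ⟨a, h⟩, hs⟩
    · rintro ⟨s, ⟨a, h⟩, hs⟩
      exact ⟨a, s, hs, h⟩
  rw [this]
  exact isOpen_iUnion fun s => isOpen_iUnion fun _ => PrimeSpectrum.isOpen_basicOpen

theorem aux_closed [Module.Finite R A] {c d : FractionRing R ⊗[R] A}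
    (hc : IsBlockIdem c) (hd : IsBlockIdem d) :
    IsClosed {q : PrimeSpectrum R | inSameBlockAt R A q c d} := by
  simp only [aux_same R A _ hc hd, Set.ofPred_forall]
  refine isClosed_iInter fun e => isClosed_iInter fun _ => ?_
  by_cases h : (e * c = c ↔ e * d = d)
  · simp [h]
  · simp only [h, imp_false]
    exact (aux_open R A e).isClosed_compl

/-- For noetherian `R`, the closure of the stratum `Γ_A(P) = {q | γ_A(q) = γ_A(p₀)}` is contained
in the skeleton `Γ_A^≤(P) = {q | γ_A(q) ≤ γ_A(p₀)}`; together with local closedness of the strata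
this says that the decomposition of `Spec R` by local block structures is a stratification. -/
theorem stmt2 [IsNoetherianRing R] [Module.Finite R A] [Module.Flat R A]
    (p₀ : PrimeSpectrum R) :
    IsLocallyClosed {q : PrimeSpectrum R | ∀ c d : FractionRing R ⊗[R] A,
        IsBlockIdem c → IsBlockIdem d →
          (inSameBlockAt R A p₀ c d ↔ inSameBlockAt R A q c d)} ∧
    closure {q : PrimeSpectrum R | ∀ c d : FractionRing R ⊗[R] A,
        IsBlockIdem c → IsBlockIdem d →
          (inSameBlockAt R A p₀ c d ↔ inSameBlockAt R A q c d)} ⊆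
      {q : PrimeSpectrum R | ∀ c d : FractionRing R ⊗[R] A,
        IsBlockIdem c → IsBlockIdem d → inSameBlockAt R A p₀ c d → inSameBlockAt R A q c d} := by
  have hC : IsClosed {q : PrimeSpectrum R | ∀ c d : FractionRing R ⊗[R] A,
        IsBlockIdem c → IsBlockIdem d → inSameBlockAt R A p₀ c d → inSameBlockAt R A q c d} := by
    simp only [Set.ofPred_forall]
    exact isClosed_iInter fun c => isClosed_iInter fun d => isClosed_iInter fun hc =>
      isClosed_iInter fun hd => isClosed_iInter fun _ => aux_closed R A hc hd
  have hfin : {c : FractionRing R ⊗[R] A | IsBlockIdem c}.Finite :=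
    (auxE_finite R A).subset fun c hc => ⟨hc.2.1, fun x => hc.2.2.2.1 x trivial⟩
  have hO : IsOpen (⋂ c ∈ {c : FractionRing R ⊗[R] A | IsBlockIdem c},
      ⋂ d ∈ {c : FractionRing R ⊗[R] A | IsBlockIdem c},
      {q : PrimeSpectrum R | inSameBlockAt R A q c d → inSameBlockAt R A p₀ c d}) := by
    refine hfin.isOpen_biInter fun c hc => hfin.isOpen_biInter fun d hd => ?_
    by_cases h : inSameBlockAt R A p₀ c d
    · simp [h]
    · simp only [h, imp_false]
      exact (aux_closed R A hc hd).isOpen_compl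
  refine ⟨⟨_, _, hO, hC, ?_⟩, closure_minimal ?_ hC⟩
  · ext q
    simp only [Set.mem_inter_iff, Set.mem_iInter, Set.mem_ofPred_eq]
    constructor
    · intro h
      exact ⟨fun c hc d hd => (h c d hc hd).2, fun c d hc hd => (h c d hc hd).1⟩
    · rintro ⟨h1, h2⟩ c d hc hd
      exact ⟨h2 c d hc hd, h1 c hc d hd⟩
  · intro q h c d hc hd
    exact (h c d hc hd).1
end

section
/- Let R be a noetherian integral domain, let A be a finite flat R-algebra with center Z, and let Υ: Spec(Z) → Spec(R) be the morphism induced by the (injective) structure map R → Z. Then for every p ∈ Spec(R): (i) every block idempotent of the fiber A(p) lies in the central subalgebra Z_p(A) := (Z_p + p_pA_p)/p_pA_p, i.e. the inclusion Z_p(A) ⊆ A(p) is block bijective; and (ii) there are canonical bijections Bl(A(p)) ≅ Bl(Z_p(A)) ≅ Bl(Z(p)) ≅ Υ^{-1}(p), where Z(p) = Z_p/p_pZ_p; in particular, the number of blocks of A(p) equals the number of prime ideals of Z lying over p. -/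
open TensorProduct

noncomputable def numBlocks (B : Type*) [Ring B] : ℕ := Nat.card {e : B // IsBlockIdem e}

noncomputable abbrev resFieldAt (R : Type*) [CommRing R] (p : PrimeSpectrum R) :=
  IsLocalRing.ResidueField (Localization.AtPrime p.asIdeal)

theorem aux_smul_mul {L B : Type*} [CommRing L] [Ring B] [Algebra L B] (I J : Ideal L) {x y : B}
    (hx : x ∈ (I • ⊤ : Submodule L B)) (hy : y ∈ (J • ⊤ : Submodule L B)) :
    x * y ∈ ((I * J) • ⊤ : Submodule L B) := by
  induction hx using Submodule.smul_induction_on' with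
  | smul r hr b _ =>
    induction hy using Submodule.smul_induction_on' with
    | smul s hs c _ =>
      rw [smul_mul_smul_comm]
      exact Submodule.smul_mem_smul (Ideal.mul_mem_mul hr hs) trivial
    | add y _ y' _ h h' => rw [mul_add]; exact add_mem h h'
  | add x _ x' _ h h' => rw [add_mul]; exact add_mem h h'

theorem aux_mul_left {L B : Type*} [CommRing L] [Ring B] [Algebra L B] (I : Ideal L) {x : B} (y : B)
    (hx : x ∈ (I • ⊤ : Submodule L B)) : y * x ∈ (I • ⊤ : Submodule L B) := by
  have := aux_smul_mul (⊤ : Ideal L) I (x := y) (y := x) (by simp) hx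
  rwa [Ideal.top_mul] at this

theorem aux_mul_right {L B : Type*} [CommRing L] [Ring B] [Algebra L B] (I : Ideal L) {x : B} (y : B)
    (hx : x ∈ (I • ⊤ : Submodule L B)) : x * y ∈ (I • ⊤ : Submodule L B) := by
  have := aux_smul_mul I (⊤ : Ideal L) (x := x) (y := y) hx (by simp)
  rwa [Ideal.mul_top] at this

theorem aux_lift {L B C : Type*} [CommRing L] [Ring B] [Algebra L B] [Ring C] (m : Ideal L)
    (π : B →+* C) (hπ : Function.Surjective π)
    (hker : ∀ x, π x = 0 ↔ x ∈ (m • ⊤ : Submodule L B)) (e : C) (he : IsIdempotentElem e) (n : ℕ) :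
    ∃ a, π a = e ∧ a * a - a ∈ (m ^ (n + 1) • ⊤ : Submodule L B) := by
  induction n with
  | zero =>
    obtain ⟨a, rfl⟩ := hπ e
    refine ⟨a, rfl, ?_⟩
    rw [zero_add, pow_one, ← hker, map_sub, map_mul, he.eq, sub_self]
  | succ n ih =>
    obtain ⟨a, ha, h⟩ := ih
    refine ⟨3 * (a * a) - 2 * (a * a * a), ?_, ?_⟩
    · have h3 : π 3 = 3 := map_ofNat π 3
      have h2 : π 2 = 2 := map_ofNat π 2
      simp only [map_sub, map_mul, ha, he.eq, h3, h2]
      noncomm_ring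
    · have e1 : (3 * (a * a) - 2 * (a * a * a)) * (3 * (a * a) - 2 * (a * a * a))
          - (3 * (a * a) - 2 * (a * a * a)) =
          ((a * a - a) * (a * a - a)) * (4 * (a * a) - 4 * a - 3) := by
        noncomm_ring
      rw [e1]
      apply aux_mul_right
      refine Submodule.smul_mono_left ?_ (aux_smul_mul _ _ h h)
      rw [← pow_add]
      exact Ideal.pow_le_pow_right (by omega)

theorem aux_comm {L B : Type*} [CommRing L] [Ring B] [Algebra L B] (m : Ideal L) (n : ℕ) (a : B)
    (ha : a * a - a ∈ (m ^ n • ⊤ : Submodule L B))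
    (h1 : ∀ b, a * b * (1 - a) ∈ (m • ⊤ : Submodule L B)) (k : ℕ) (hk : k ≤ n) :
    ∀ b, a * b * (1 - a) ∈ (m ^ k • ⊤ : Submodule L B) := by
  induction k with
  | zero => intro b; simp
  | succ k ih =>
    intro b
    have h := ih (by omega) b
    have h2 : ∀ c ∈ (m ^ k • ⊤ : Submodule L B),
        a * c * (1 - a) ∈ (m ^ (k + 1) • ⊤ : Submodule L B) := by
      intro c hc
      induction hc using Submodule.smul_induction_on' with
      | smul r hr b _ =>
        rw [mul_smul_comm, smul_mul_assoc, pow_succ, mul_smul]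
        exact Submodule.smul_mem_smul hr (h1 b)
      | add y _ y' _ h h' => rw [mul_add, add_mul]; exact add_mem h h'
    have h3 := h2 _ h
    have hn : a * a - a ∈ (m ^ (k + 1) • ⊤ : Submodule L B) :=
      Submodule.smul_mono_left (Ideal.pow_le_pow_right hk) ha
    have e1 : a * b * (1 - a) = a * (a * b * (1 - a)) * (1 - a)
        - (a * a - a) * (b * ((1 - a) * (1 - a))) + a * b * (a * a - a) * (-1) := by
      noncomm_ring
    rw [e1]
    exact add_mem (sub_mem h3 (aux_mul_right _ _ hn)) (aux_mul_right _ _ (aux_mul_left _ _ hn))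

theorem aux_comm' {L B : Type*} [CommRing L] [Ring B] [Algebra L B] (m : Ideal L) (n : ℕ) (a : B)
    (ha : a * a - a ∈ (m ^ n • ⊤ : Submodule L B))
    (h1 : ∀ b, a * b - b * a ∈ (m • ⊤ : Submodule L B))
    (ha1 : a * a - a ∈ (m • ⊤ : Submodule L B)) (b : B) :
    a * b - b * a ∈ (m ^ n • ⊤ : Submodule L B) := by
  have A1 := aux_comm m n a ha (by
    intro b
    have e1 : a * b * (1 - a) = (a * b - b * a) * (1 - a) - b * (a * a - a) := by noncomm_ring
    rw [e1]
    exact sub_mem (aux_mul_right _ _ (h1 b)) (aux_mul_left _ _ ha1)) n le_rfl b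
  have A2 := aux_comm m n (1 - a) (by
    have e1 : (1 - a) * (1 - a) - (1 - a) = a * a - a := by noncomm_ring
    rwa [e1]) (by
    intro b
    have e1 : (1 - a) * b * (1 - (1 - a)) = - (1 - a) * (a * b - b * a) - (a * a - a) * b := by
      noncomm_ring
    rw [e1]
    exact sub_mem (aux_mul_left _ _ (h1 b)) (aux_mul_right _ _ ha1)) n le_rfl b
  have e1 : a * b - b * a = a * b * (1 - a) - (1 - a) * b * (1 - (1 - a)) := by noncomm_ring
  rw [e1]
  exact sub_mem A1 A2

theorem aux_pi {L B ι : Type*} [CommRing L] [AddCommGroup B] [Module L B] [Finite ι]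
    (I : Ideal L) (f : ι → B) (hf : ∀ i, f i ∈ (I • ⊤ : Submodule L B)) :
    f ∈ (I • ⊤ : Submodule L (ι → B)) := by
  classical
  cases nonempty_fintype ι
  rw [← Finset.univ_sum_single f]
  refine sum_mem fun i _ => ?_
  have : LinearMap.single L (fun _ : ι => B) i (f i) ∈
      (I • ⊤ : Submodule L B).map (LinearMap.single L (fun _ : ι => B) i) :=
    Submodule.mem_map_of_mem (hf i)
  rw [Submodule.map_smul''] at this
  exact Submodule.smul_mono le_rfl le_top this

theorem aux_central_s11 {L B C : Type*} [CommRing L] [IsNoetherianRing L] [Ring B] [Algebra L B]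
    [Module.Finite L B] [Ring C] (m : Ideal L)
    (π : B →+* C) (hπ : Function.Surjective π)
    (hker : ∀ x, π x = 0 ↔ x ∈ (m • ⊤ : Submodule L B)) (e : C) (he : IsIdempotentElem e)
    (hc : ∀ x, e * x = x * e) : ∃ z : B, (∀ b, z * b = b * z) ∧ π z = e := by
  obtain ⟨s, hs⟩ := (Module.Finite.fg_top : (⊤ : Submodule L B).FG)
  let d : B →ₗ[L] (s → B) := LinearMap.pi fun i =>
    LinearMap.mulRight L (i : B) - LinearMap.mulLeft L (i : B)
  have hd : ∀ a i, d a i = a * i - i * a := fun a i => rfl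
  obtain ⟨k, hk⟩ := Ideal.exists_pow_inf_eq_pow_smul m (LinearMap.range d)
  obtain ⟨a, ha, h⟩ := aux_lift m π hπ hker e he k
  have ha1 : a * a - a ∈ (m • ⊤ : Submodule L B) := by
    rw [← hker, map_sub, map_mul, ha, he.eq, sub_self]
  have hcomm := aux_comm' m (k + 1) a h (by
    intro b
    rw [← hker, map_sub, map_mul, map_mul, ha, hc, sub_self]) ha1
  have hda : d a ∈ m ^ (k + 1) • ⊤ ⊓ LinearMap.range d :=
    ⟨aux_pi _ _ fun i => hcomm i, a, rfl⟩
  rw [hk (k + 1) (by omega), Nat.add_sub_cancel_left, pow_one] at hda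
  have hda' : d a ∈ m • (LinearMap.range d) := Submodule.smul_mono le_rfl inf_le_right hda
  rw [LinearMap.range_eq_map, ← Submodule.map_smul''] at hda'
  obtain ⟨b, hb, hab⟩ := hda'
  refine ⟨a - b, ?_, ?_⟩
  · have hz : d (a - b) = 0 := by rw [map_sub, hab, sub_self]
    intro x
    have hx : x ∈ Submodule.span L (s : Set B) := by rw [hs]; trivial
    induction hx using Submodule.span_induction with
    | mem x hx => 
      have := congrFun hz ⟨x, hx⟩
      rw [hd] at this
      exact sub_eq_zero.mp this
    | zero => simp
    | add x y _ _ h h' => rw [mul_add, add_mul, h, h']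
    | smul r x _ h => rw [mul_smul_comm, smul_mul_assoc, h]
  · rw [map_sub, ha, (hker b).2 hb, sub_zero]

theorem aux_nil {L B W : Type*} [CommRing L] [IsNoetherianRing L] [Ring B] [Algebra L B]
    [Module.Finite L B] [Ring W] [Algebra L W] (m : Ideal L) (ψ : W →ₐ[L] B)
    (hψ : Function.Injective ψ) (w : W) (hw : ψ w ∈ (m • ⊤ : Submodule L B)) :
    ∃ n, w ^ n ∈ (m • ⊤ : Submodule L W) := by
  obtain ⟨k, hk⟩ := Ideal.exists_pow_inf_eq_pow_smul m (LinearMap.range ψ.toLinearMap)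
  have hp : ∀ n, ψ w ^ n ∈ (m ^ n • ⊤ : Submodule L B) := by
    intro n
    induction n with
    | zero => simp
    | succ n ih => rw [pow_succ, pow_succ]; exact aux_smul_mul _ _ ih hw
  have h1 : ψ w ^ (k + 1) ∈ m ^ (k + 1) • ⊤ ⊓ LinearMap.range ψ.toLinearMap :=
    ⟨hp _, w ^ (k + 1), by simp⟩
  rw [hk (k + 1) (by omega), Nat.add_sub_cancel_left, pow_one] at h1
  have h2 := Submodule.smul_mono (le_refl m) inf_le_right h1
  rw [LinearMap.range_eq_map, ← Submodule.map_smul''] at h2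
  obtain ⟨b, hb, hab⟩ := h2
  refine ⟨k + 1, ?_⟩
  have : b = w ^ (k + 1) := hψ (by simpa using hab)
  exact this ▸ hb

theorem aux_blockOn {W C : Type*} [CommRing W] [Ring C] (φ : W →+* C)
    (hc : ∀ w x, φ w * x = x * φ w)
    (hs : ∀ e : C, IsIdempotentElem e → (∀ x, e * x = x * e) → e ∈ Set.range φ) (e : C) :
    IsBlockIdemOn (Set.range φ) e ↔ IsBlockIdem e := by
  have hS : ∀ y ∈ Set.range φ, ∀ x, y * x = x * y := by
    rintro _ ⟨w, rfl⟩ x; exact hc w x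
  constructor
  · rintro ⟨h1, h2, h3, h4, h5⟩
    refine ⟨trivial, h2, h3, fun x _ => hS e h1 x, ?_⟩
    intro f g _ _ hf hg hfi hgi hfg hadd
    have hf' := hs f hfi fun x => hf x trivial
    have hg' := hs g hgi fun x => hg x trivial
    exact h5 f g hf' hg' (fun x _ => hf x trivial) (fun x _ => hg x trivial) hfi hgi hfg hadd
  · rintro ⟨_, h2, h3, h4, h5⟩
    refine ⟨hs e h2 fun x => h4 x trivial, h2, h3, fun x _ => h4 x trivial, ?_⟩
    intro f g hf hg _ _ hfi hgi hfg hadd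
    exact h5 f g trivial trivial (fun x _ => hS f hf x) (fun x _ => hS g hg x) hfi hgi hfg hadd

theorem aux_numBlocks {W C : Type*} [CommRing W] [Ring C] (φ : W →+* C)
    (hc : ∀ w x, φ w * x = x * φ w)
    (hs : ∀ e : C, IsIdempotentElem e → (∀ x, e * x = x * e) → e ∈ Set.range φ)
    (hn : ∀ w, φ w = 0 → IsNilpotent w) : numBlocks C = numBlocks W := by
  have inj : ∀ e f : W, IsIdempotentElem e → IsIdempotentElem f → φ e = φ f → e = f := by
    intro e f he hf h
    exact eq_of_isNilpotent_sub_of_isIdempotentElem he hf (hn _ (by rw [map_sub, h, sub_self]))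
  have surj : ∀ e : C, IsIdempotentElem e → (∀ x, e * x = x * e) →
      ∃ e', IsIdempotentElem e' ∧ φ e' = e := fun e he hce =>
    exists_isIdempotentElem_eq_of_ker_isNilpotent φ (fun x hx => hn x hx) e (hs e he hce) he
  have hb : ∀ e : W, IsIdempotentElem e → (IsBlockIdem e ↔ IsBlockIdem (φ e)) := by
    intro e he
    constructor
    · rintro ⟨_, _, h3, h4, h5⟩
      refine ⟨trivial, he.map φ, fun h => h3 (inj _ _ he .zero (by simpa using h)),
        fun x _ => hc e x, ?_⟩
      intro f g _ _ hf hg hfi hgi hfg hadd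
      obtain ⟨f', hf', rfl⟩ := surj f hfi fun x => hf x trivial
      obtain ⟨g', hg', rfl⟩ := surj g hgi fun x => hg x trivial
      have h0 : f' * g' = 0 := inj _ _ (hf'.mul hg') .zero (by simpa using hfg)
      have hi : IsIdempotentElem (f' + g') := by
        unfold IsIdempotentElem at *
        linear_combination hf' + hg' + 2 * h0
      have := h5 f' g' trivial trivial (fun x _ => mul_comm _ _) (fun x _ => mul_comm _ _) hf' hg'
        h0 (inj _ _ hi he (by simpa using hadd))
      rcases this with rfl | rfl <;> simp
    · rintro ⟨_, _, h3, h4, h5⟩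
      refine ⟨trivial, he, fun h => h3 (by simp [h]), fun x _ => mul_comm _ _, ?_⟩
      intro f g _ _ hf hg hfi hgi hfg hadd
      have := h5 (φ f) (φ g) trivial trivial (fun x _ => hc _ _) (fun x _ => hc _ _)
        (hfi.map φ) (hgi.map φ) (by rw [← map_mul, hfg, map_zero]) (by rw [← map_add, hadd])
      rcases this with h | h
      · exact Or.inl (inj _ _ hfi .zero (by simpa using h))
      · exact Or.inr (inj _ _ hgi .zero (by simpa using h))
  symm
  refine Nat.card_congr (Equiv.ofBijective
    (fun e : {e : W // IsBlockIdem e} =>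
      (⟨φ e.1, (hb e.1 e.2.2.1).1 e.2⟩ : {e : C // IsBlockIdem e})) ⟨?_, ?_⟩)
  · rintro ⟨e, he⟩ ⟨f, hf⟩ h
    exact Subtype.ext (inj _ _ he.2.1 hf.2.1 (congrArg Subtype.val h))
  · rintro ⟨e, he⟩
    obtain ⟨e', he', rfl⟩ := surj e he.2.1 fun x => he.2.2.2.1 x trivial
    exact ⟨⟨e', (hb e' he').2 he⟩, rfl⟩

theorem aux_spec (W : Type*) [CommRing W] [IsArtinianRing W] :
    numBlocks W = Nat.card (PrimeSpectrum W) := by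
  symm
  have key : ∀ x : PrimeSpectrum W, ∃ e : W, IsIdempotentElem e ∧
      (PrimeSpectrum.basicOpen e : Set (PrimeSpectrum W)) = {x} := by
    intro x
    obtain ⟨e, ⟨he, h⟩, _⟩ := PrimeSpectrum.existsUnique_idempotent_basicOpen_eq_of_isClopen
      (isClopen_discrete ({x} : Set (PrimeSpectrum W)))
    exact ⟨e, he, h.symm⟩
  have inj : ∀ e f : W, IsIdempotentElem e → IsIdempotentElem f →
      (PrimeSpectrum.basicOpen e : Set (PrimeSpectrum W)) = PrimeSpectrum.basicOpen f → e = f :=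
    fun e f he hf h => PrimeSpectrum.basicOpen_injOn_isIdempotentElem he hf (SetLike.ext' h)
  choose E hE hE' using key
  have hne : ∀ e : W, IsIdempotentElem e → e ≠ 0 → ∃ x, x ∈ PrimeSpectrum.basicOpen e := by
    intro e he h0
    by_contra! hx
    apply h0
    apply inj _ _ he .zero
    ext x
    simpa using hx x
  have hblock : ∀ x, IsBlockIdem (E x) := by
    intro x
    refine ⟨trivial, hE x, ?_, fun x _ => mul_comm _ _, ?_⟩
    · intro h
      have := hE' x
      rw [h] at this
      have hx : x ∈ ({x} : Set (PrimeSpectrum W)) := rfl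
      rw [← this] at hx
      simp at hx
    · intro f g _ _ _ _ hf hg hfg hadd
      by_contra! h
      obtain ⟨y, hy⟩ := hne f hf h.1
      obtain ⟨z, hz⟩ := hne g hg h.2
      have e1 : f = f * E x := by rw [← hadd, mul_add, hfg, add_zero, hf.eq]
      have e2 : g = g * E x := by rw [← hadd, mul_add, mul_comm g f, hfg, zero_add, hg.eq]
      have hy' : y ∈ (PrimeSpectrum.basicOpen (E x) : Set (PrimeSpectrum W)) := by
        rw [e1, PrimeSpectrum.basicOpen_mul] at hy; exact hy.2
      have hz' : z ∈ (PrimeSpectrum.basicOpen (E x) : Set (PrimeSpectrum W)) := by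
        rw [e2, PrimeSpectrum.basicOpen_mul] at hz; exact hz.2
      rw [hE'] at hy' hz'
      obtain rfl : y = x := hy'
      obtain rfl : z = y := hz'
      have : z ∈ PrimeSpectrum.basicOpen (f * g) := by
        rw [PrimeSpectrum.basicOpen_mul]; exact ⟨hy, hz⟩
      rw [hfg] at this
      simp at this
  refine Nat.card_congr (Equiv.ofBijective
    (fun x => (⟨E x, hblock x⟩ : {e : W // IsBlockIdem e})) ⟨?_, ?_⟩)
  · intro x y h
    have h' : E x = E y := congrArg Subtype.val h
    have : ({x} : Set (PrimeSpectrum W)) = {y} := by rw [← hE', ← hE', h']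
    simpa using this
  · rintro ⟨e, he⟩
    obtain ⟨x, hx⟩ := hne e he.2.1 he.2.2.1
    refine ⟨x, Subtype.ext ?_⟩
    have hle : E x * e = E x := by
      apply inj _ _ ((hE x).mul he.2.1) (hE x)
      rw [PrimeSpectrum.basicOpen_mul, TopologicalSpace.Opens.coe_inf, hE']
      simpa using hx
    have hEx := (hE x)
    have hee := he.2.1
    have h := he.2.2.2.2 (E x) (e - E x) trivial trivial (fun x _ => mul_comm _ _)
      (fun x _ => mul_comm _ _) (hE x)
      (by unfold IsIdempotentElem at *; linear_combination hEx + hee - 2 * hle)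
      (by unfold IsIdempotentElem at *; linear_combination hle - hEx) (by ring)
    rcases h with h | h
    · exact absurd h (hblock x).2.2.1
    · exact (sub_eq_zero.mp h).symm

theorem aux_ker (R : Type*) [CommRing R] (L K M : Type*) [CommRing L] [Algebra R L] [CommRing K]
    [Algebra R K] [AddCommGroup M] [Module R M] (f : L →ₐ[R] K) (hf : Function.Surjective f)
    (m : Ideal L) (hm : RingHom.ker f = m) (x : L ⊗[R] M) :
    LinearMap.rTensor M f.toLinearMap x = 0 ↔ x ∈ (m • ⊤ : Submodule L (L ⊗[R] M)) := by
  have hex : Function.Exact (m.restrictScalars R).subtype f.toLinearMap := by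
    intro y
    rw [← hm]
    simp
  rw [rTensor_exact M hex hf x]
  constructor
  · rintro ⟨y, rfl⟩
    induction y with
    | zero => simp
    | add a b ha hb => rw [map_add]; exact add_mem ha hb
    | tmul a b =>
      have : LinearMap.rTensor M (m.restrictScalars R).subtype (a ⊗ₜ b) =
          (a : L) • ((1 : L) ⊗ₜ[R] b) := by
        simp [TensorProduct.smul_tmul']
      rw [this]
      exact Submodule.smul_mem_smul a.2 trivial
  · intro hx
    change x ∈ LinearMap.range (LinearMap.rTensor M (m.restrictScalars R).subtype)
    induction hx using Submodule.smul_induction_on' with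
    | add y _ y' _ h h' => exact add_mem h h'
    | smul r hr b hb =>
      clear hb
      induction b with
      | zero => simp
      | add a b ha hb => rw [smul_add]; exact add_mem ha hb
      | tmul a b =>
        refine ⟨⟨r * a, m.mul_mem_right _ hr⟩ ⊗ₜ b, ?_⟩
        simp [TensorProduct.smul_tmul']

theorem aux_center (R : Type*) [CommRing R] (S : Submonoid R) (A : Type*) [Ring A]
    [Algebra R A] [Module.Finite R A] (z : Localization S ⊗[R] A) (hz : ∀ b, z * b = b * z) :
    z ∈ Set.range (Algebra.TensorProduct.map (AlgHom.id R (Localization S))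
      (Subalgebra.center R A).val) := by
  obtain ⟨s, hs⟩ := (Module.Finite.fg_top : (⊤ : Submodule R A).FG)
  obtain ⟨⟨a, t⟩, hat⟩ := IsLocalizedModule.surj S (TensorProduct.mk R (Localization S) A 1) z
  have hat : (t : R) • z = (1 : Localization S) ⊗ₜ[R] a := hat
  have h1 : ∀ b : A, ∃ u : S, (u : R) • (a * b - b * a) = 0 := by
    intro b
    have := (IsLocalizedModule.eq_zero_iff S (TensorProduct.mk R (Localization S) A 1)
      (m := a * b - b * a)).1 (by
        have h := hz ((1 : Localization S) ⊗ₜ[R] b)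
        have h' := congrArg (fun x => (t : R) • x) h
        beta_reduce at h'
        rw [← smul_mul_assoc, ← mul_smul_comm, hat] at h'
        simp only [Algebra.TensorProduct.tmul_mul_tmul, mul_one] at h'
        simp [TensorProduct.tmul_sub, h'])
    exact this
  choose u hu using h1
  let v : S := ∏ b ∈ s, u b
  have hv : ∀ b : A, ((v : R) • a) * b = b * ((v : R) • a) := by
    intro b
    have hb : b ∈ Submodule.span R (s : Set A) := by rw [hs]; trivial
    induction hb using Submodule.span_induction with
    | mem x hx =>
      have hd : u x ∣ v := Finset.dvd_prod_of_mem u hx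
      obtain ⟨w, hw⟩ := hd
      rw [smul_mul_assoc, mul_smul_comm, ← sub_eq_zero, ← smul_sub, hw, mul_comm,
        Submonoid.coe_mul, mul_smul, hu, smul_zero]
    | zero => simp
    | add x y _ _ h h' => rw [mul_add, add_mul, h, h']
    | smul r x _ h => rw [mul_smul_comm r, smul_mul_assoc r, h]
  have hmem : (v : R) • a ∈ Subalgebra.center R A := by
    rw [Subalgebra.mem_center_iff]
    exact fun b => (hv b).symm
  refine ⟨Localization.mk 1 (v * t) ⊗ₜ ⟨(v : R) • a, hmem⟩, ?_⟩
  simp only [Algebra.TensorProduct.map_tmul, AlgHom.coe_id, id_eq, Subalgebra.coe_val]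
  have e2 : (Localization.mk 1 (v * t) : Localization S) ⊗ₜ[R] ((v : R) • a) =
      (Localization.mk 1 (v * t) : Localization S) • (v : R) • ((1 : Localization S) ⊗ₜ[R] a) := by
    rw [← TensorProduct.tmul_smul, TensorProduct.smul_tmul', smul_eq_mul, mul_one]
  rw [e2, ← hat, smul_smul, ← Submonoid.coe_mul, ← algebraMap_smul (Localization S) _ z, smul_smul,
    ← Localization.mk_one_eq_algebraMap, Localization.mk_mul, one_mul, mul_one,
    Localization.mk_self, one_smul]

theorem stmt_aux (R : Type u) [CommRing R] [IsNoetherianRing R]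
    (A : Type u) [Ring A] [Algebra R A] [Module.Finite R A]
    (p : PrimeSpectrum R) :
    let φ := (Algebra.TensorProduct.map (AlgHom.id R (resFieldAt R p))
          (Subalgebra.center R A).val :
            resFieldAt R p ⊗[R] (Subalgebra.center R A) →ₐ[R] resFieldAt R p ⊗[R] A)
    (∀ w x, φ w * x = x * φ w) ∧
    (∀ e, IsIdempotentElem e → (∀ x, e * x = x * e) → e ∈ Set.range φ) ∧
    (∀ w, φ w = 0 → IsNilpotent w) := by
  intro φ
  let L := Localization.AtPrime p.asIdeal
  let K := resFieldAt R p
  let Z := Subalgebra.center R A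
  let m := IsLocalRing.maximalIdeal L
  let f : L →ₐ[R] K := IsScalarTower.toAlgHom R L K
  have hf : Function.Surjective f := IsLocalRing.residue_surjective
  have hm : RingHom.ker f = m := IsLocalRing.ker_residue
  let π : L ⊗[R] A →ₐ[R] K ⊗[R] A := Algebra.TensorProduct.map f (AlgHom.id R A)
  let πZ : L ⊗[R] Z →ₐ[R] K ⊗[R] Z := Algebra.TensorProduct.map f (AlgHom.id R Z)
  have hπ : Function.Surjective π := LinearMap.rTensor_surjective A hf
  have hπZ : Function.Surjective πZ := LinearMap.rTensor_surjective Z hf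
  have kπ : ∀ x, π x = 0 ↔ x ∈ (m • ⊤ : Submodule L (L ⊗[R] A)) := aux_ker R L K A f hf m hm
  have kπZ : ∀ x, πZ x = 0 ↔ x ∈ (m • ⊤ : Submodule L (L ⊗[R] Z)) := aux_ker R L K Z f hf m hm
  let ψ : L ⊗[R] Z →ₐ[L] L ⊗[R] A := Algebra.TensorProduct.map (AlgHom.id L L) Z.val
  have hψ : Function.Injective ψ :=
    Module.Flat.lTensor_preserves_injective_linearMap (M := L) Z.val.toLinearMap
      Subtype.val_injective
  have hsq : ∀ w, φ (πZ w) = π (ψ w) := by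
    intro w
    induction w with
    | zero => simp
    | add a b ha hb => simp only [map_add, ha, hb]
    | tmul a b => simp [φ, π, πZ, ψ]
  refine ⟨?_, ?_, ?_⟩
  · intro w x
    induction w with
    | zero => simp
    | add a b ha hb => simp only [map_add, add_mul, mul_add, ha, hb]
    | tmul a b =>
      induction x with
      | zero => simp
      | add a b ha hb => simp only [add_mul, mul_add, ha, hb]
      | tmul c d =>
        simp only [φ, Algebra.TensorProduct.map_tmul, Algebra.TensorProduct.tmul_mul_tmul,
          AlgHom.coe_id, id_eq, Subalgebra.coe_val]
        rw [mul_comm a c, Subalgebra.mem_center_iff.1 b.2 d]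
  · intro e he hc
    obtain ⟨z, hz, rfl⟩ := aux_central_s11 m (π : L ⊗[R] A →+* K ⊗[R] A) hπ kπ e he hc
    obtain ⟨w, rfl⟩ := aux_center R p.asIdeal.primeCompl A z hz
    exact ⟨πZ w, hsq w⟩
  · intro w hw
    obtain ⟨w, rfl⟩ := hπZ w
    rw [hsq, kπ] at hw
    obtain ⟨n, hn⟩ := aux_nil m ψ hψ w hw
    exact ⟨n, by rw [← map_pow]; exact (kπZ _).2 hn⟩

/-- **Theorem `mueller_maintheorem`.** For a finite flat algebra `A` over a noetherian domain `R`
with center `Z`: (i) every block idempotent of the fiber `A(p) = κ(p) ⊗[R] A` lies in the central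
subalgebra `Z_p(A)` (the image of `Z(p) = κ(p) ⊗[R] Z`), i.e. the inclusion `Z_p(A) ⊆ A(p)` is
block bijective; (ii) there are canonical bijections
`Bl(A(p)) ≅ Bl(Z_p(A)) ≅ Bl(Z(p)) ≅ Υ⁻¹(p)`; in particular the number of blocks of `A(p)` equals
the number of primes of `Z` lying over `p`. -/
theorem stmt11 (R : Type u) [CommRing R] [IsDomain R] [IsNoetherianRing R]
    (A : Type u) [Ring A] [Algebra R A] [Module.Finite R A] [Module.Flat R A]
    (p : PrimeSpectrum R) :
    {e : resFieldAt R p ⊗[R] A | IsBlockIdemOn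
        (Set.range ⇑(Algebra.TensorProduct.map (AlgHom.id R (resFieldAt R p))
          (Subalgebra.center R A).val :
            resFieldAt R p ⊗[R] (Subalgebra.center R A) →ₐ[R] resFieldAt R p ⊗[R] A)) e} =
      {e : resFieldAt R p ⊗[R] A | IsBlockIdem e} ∧
    numBlocks (resFieldAt R p ⊗[R] A) =
      Nat.card {e : resFieldAt R p ⊗[R] A // IsBlockIdemOn
        (Set.range ⇑(Algebra.TensorProduct.map (AlgHom.id R (resFieldAt R p))
          (Subalgebra.center R A).val :
            resFieldAt R p ⊗[R] (Subalgebra.center R A) →ₐ[R] resFieldAt R p ⊗[R] A)) e} ∧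
    numBlocks (resFieldAt R p ⊗[R] A) =
      numBlocks (resFieldAt R p ⊗[R] (Subalgebra.center R A)) ∧
    numBlocks (resFieldAt R p ⊗[R] A) =
      Nat.card {Q : PrimeSpectrum (Subalgebra.center R A) //
        PrimeSpectrum.comap (algebraMap R (Subalgebra.center R A)) Q = p} := by
  obtain ⟨h1, h2, h3⟩ := stmt_aux R A p
  set φ := (Algebra.TensorProduct.map (AlgHom.id R (resFieldAt R p))
          (Subalgebra.center R A).val :
            resFieldAt R p ⊗[R] (Subalgebra.center R A) →ₐ[R] resFieldAt R p ⊗[R] A)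
  have hB := aux_blockOn (φ : resFieldAt R p ⊗[R] (Subalgebra.center R A) →+*
    resFieldAt R p ⊗[R] A) h1 h2
  have hN := aux_numBlocks (φ : resFieldAt R p ⊗[R] (Subalgebra.center R A) →+*
    resFieldAt R p ⊗[R] A) h1 h2 h3
  have hB' : {e : resFieldAt R p ⊗[R] A | IsBlockIdemOn (Set.range φ) e} =
      {e : resFieldAt R p ⊗[R] A | IsBlockIdem e} := Set.ext hB
  refine ⟨hB', ?_, hN, ?_⟩
  · exact Nat.card_congr (Equiv.setCongr hB'.symm)
  · rw [hN]
    have : Module.Finite R (Subalgebra.center R A) :=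
      inferInstanceAs (Module.Finite R (Subalgebra.toSubmodule (Subalgebra.center R A)))
    have : IsArtinianRing (resFieldAt R p ⊗[R] (Subalgebra.center R A)) :=
      IsArtinianRing.of_finite (resFieldAt R p) _
    exact (aux_spec _).trans
      (Nat.card_congr (PrimeSpectrum.preimageEquivFiber R (Subalgebra.center R A) p).symm)
end
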